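/- arXiv:1411.4732 — 2 statements merged into one kernel-verified Lean document; each statement's English description precedes it below -/
import Mathlib

section
/- Let Z and Y be jointly distributed random variables on finite types, with joint pmf p. If the conditional entropy H(Y|Z) = 0, then for every state y with p_Y(y) > 0, the specific information of Z about y equals the surprisal of y: ∑_z p(z|y) * logb 2 (p(z|y) / p_Z(z)) = logb 2 (1 / p_Y(y)) (where the sum ranges over z with p(z|y) > 0). -/
open Real Finset

/-!
Each term `-p(z,y) log (p(z,y) / p_Z(z))` of `H(Y|Z)` is nonnegative, so `H(Y|Z) = 0` forces every
term to vanish: `Y` is a function of `Z`, that is, `p(z,y)` is either `0` or the whole marginal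
`p_Z(z)`. In the second case `p(z|y) / p_Z(z) = 1 / p_Y(y)`, so the specific information about `y`
is the average, over `z` distributed as `p(z|y)`, of the constant `log (1 / p_Y(y))`.
-/

section Logb

variable {b x q : ℝ}

theorem neg_mul_logb_div_nonneg (hb : 1 < b) (hx : 0 ≤ x) (hxq : x ≤ q) :
    0 ≤ -(x * logb b (x / q)) := by
  have hq : 0 ≤ q := hx.trans hxq
  have hlog : logb b (x / q) ≤ 0 := logb_nonpos hb (div_nonneg hx hq) (div_le_one_of_le₀ hxq hq)
  exact neg_nonneg.2 (mul_nonpos_of_nonneg_of_nonpos hx hlog)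

theorem eq_zero_or_eq_of_mul_logb_div_eq_zero (hb : 1 < b) (hx : 0 ≤ x) (hxq : x ≤ q)
    (h : x * logb b (x / q) = 0) : x = 0 ∨ x = q := by
  refine hx.eq_or_lt.imp Eq.symm fun hx_pos => ?_
  have hq : 0 < q := hx_pos.trans_le hxq
  have hlog : logb b (x / q) = 0 := (mul_eq_zero.1 h).resolve_left hx_pos.ne'
  exact (div_eq_one_iff_eq hq.ne').1 (eq_one_of_pos_of_logb_eq_zero hb (div_pos hx_pos hq) hlog)

end Logb

section Joint

variable {Z Y : Type*} {b : ℝ}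

theorem eq_zero_or_eq_marginal_of_condEntropy_eq_zero (hb : 1 < b) {p : Z × Y → ℝ}
    (hp : ∀ zy, 0 ≤ p zy) {pZ : Z → ℝ} (hpZ : ∀ z, HasSum (fun y => p (z, y)) (pZ z))
    (hH : HasSum (fun zy => -(p zy * logb b (p zy / pZ zy.1))) 0) (z : Z) (y : Y) :
    p (z, y) = 0 ∨ p (z, y) = pZ z := by
  have hle (zy : Z × Y) : p zy ≤ pZ zy.1 := le_hasSum (hpZ zy.1) zy.2 fun y' _ => hp (zy.1, y')
  have hterms := (hasSum_zero_iff_of_nonneg fun zy =>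
    neg_mul_logb_div_nonneg hb (hp zy) (hle zy)).1 hH
  exact eq_zero_or_eq_of_mul_logb_div_eq_zero hb (hp (z, y)) (hle (z, y))
    (neg_eq_zero.1 (congrFun hterms (z, y)))

theorem hasSum_specificInfo_of_eq_zero_or_eq {f q : Z → ℝ} {r : ℝ} (hr : r ≠ 0) (hf : HasSum f r)
    (hfq : ∀ z, f z = 0 ∨ f z = q z) :
    HasSum (fun z => f z / r * logb b (f z / r / q z)) (logb b (1 / r)) := by
  have hterm (z : Z) : f z / r * logb b (f z / r / q z) = f z / r * logb b (1 / r) := by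
    by_cases hz : f z = 0
    · simp [hz]
    · rw [← (hfq z).resolve_left hz, div_right_comm, div_self hz]
  have hcond : HasSum (fun z => f z / r) 1 := div_self hr ▸ hf.div_const r
  simpa only [hterm, one_mul] using hcond.mul_right (logb b (1 / r))

theorem stmt_0_general (hb : 1 < b) {p : Z × Y → ℝ} (hp : ∀ zy, 0 ≤ p zy)
    {pZ : Z → ℝ} (hpZ : ∀ z, HasSum (fun y => p (z, y)) (pZ z))
    (hH : HasSum (fun zy => -(p zy * logb b (p zy / pZ zy.1))) 0)
    {y : Y} {py : ℝ} (hpy : HasSum (fun z => p (z, y)) py) (hy : 0 < py) :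
    HasSum (fun z => p (z, y) / py * logb b (p (z, y) / py / pZ z)) (logb b (1 / py)) :=
  hasSum_specificInfo_of_eq_zero_or_eq hy.ne' hpy fun z =>
    eq_zero_or_eq_marginal_of_condEntropy_eq_zero hb hp hpZ hH z y

end Joint

/-- If `H(Y|Z) = 0`, then for every state `y` with `p_Y(y) > 0`, the specific
information of `Z` about `y` equals the surprisal of `y`.
Here `p : Z × Y → ℝ` is a joint pmf; `p_Y(y) = ∑ z, p (z, y)`, `p_Z(z) = ∑ y, p (z, y)`,
and `p(z|y) = p (z, y) / p_Y(y)`.  (Terms with zero probability vanish automatically,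
since `0 * logb 2 x = 0` and `logb 2` of junk values multiplies a zero factor.) -/
theorem stmt_0 {Z Y : Type*} [Fintype Z] [Fintype Y]
    (p : Z × Y → ℝ)
    (hnn : ∀ zy, 0 ≤ p zy)
    (hsum : ∑ zy, p zy = 1)
    (hcondEnt : -∑ z, ∑ y, p (z, y) * logb 2 (p (z, y) / ∑ y', p (z, y')) = 0)
    (y : Y) (hy : 0 < ∑ z, p (z, y)) :
    ∑ z, (p (z, y) / ∑ z', p (z', y)) *
        logb 2 ((p (z, y) / ∑ z', p (z', y)) / ∑ y', p (z, y')) =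
      logb 2 (1 / ∑ z, p (z, y)) := by
  have hH : HasSum (fun zy => -(p zy * logb 2 (p zy / ∑ y', p (zy.1, y')))) 0 := by
    simpa only [sum_neg_distrib, Fintype.sum_prod_type, hcondEnt] using
      hasSum_fintype fun zy => -(p zy * logb 2 (p zy / ∑ y', p (zy.1, y')))
  exact (hasSum_fintype _).unique <| stmt_0_general one_lt_two hnn (fun _ => hasSum_fintype _) hH
    (hasSum_fintype _) hy
end

section
/- Let ι be a nonempty finite index type and let (X_i)_{i ∈ ι}, Z, and Y be jointly distributed random variables on finite types with joint pmf p. If H(Y|Z) = 0, then adding Z as an extra predictor does not change I_min: ∑_y p_Y(y) * min( I(Z:y), min_{i ∈ ι} I(X_i:y) ) = ∑_y p_Y(y) * min_{i ∈ ι} I(X_i:y), where both sums range over y with p_Y(y) > 0. (This is the equality case of Strong Monotonicity for the measure I_min.) -/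
open Real Finset

/- STATEMENT 2: Strong-monotonicity equality case for `I_min`: if `H(Y|Z) = 0`, then adding
`Z` as an extra predictor does not change `I_min`.  The joint pmf is
`p : (∀ i, X i) × Z × Y → ℝ`. -/

section Defs

variable {ι : Type*} [Fintype ι] [DecidableEq ι] {X : ι → Type*} [∀ i, Fintype (X i)]
  [∀ i, DecidableEq (X i)] {Z Y : Type*} [Fintype Z] [Fintype Y]

/-- Marginal of `Y`. -/
noncomputable def margY (p : (∀ i, X i) × Z × Y → ℝ) (y : Y) : ℝ :=
  ∑ x, ∑ z, p (x, z, y)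

/-- Marginal of `Z`. -/
noncomputable def margZ (p : (∀ i, X i) × Z × Y → ℝ) (z : Z) : ℝ :=
  ∑ x, ∑ y, p (x, z, y)

/-- Marginal of `(Z, Y)`. -/
noncomputable def margZY (p : (∀ i, X i) × Z × Y → ℝ) (z : Z) (y : Y) : ℝ :=
  ∑ x, p (x, z, y)

/-- Marginal of the predictor `X i`. -/
noncomputable def margXi (p : (∀ i, X i) × Z × Y → ℝ) (i : ι) (u : X i) : ℝ :=
  ∑ x, ∑ z, ∑ y, if x i = u then p (x, z, y) else 0

/-- Marginal of `(X i, Y)`. -/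
noncomputable def margXiY (p : (∀ i, X i) × Z × Y → ℝ) (i : ι) (u : X i) (y : Y) : ℝ :=
  ∑ x, ∑ z, if x i = u then p (x, z, y) else 0

/-- Conditional entropy `H(Y|Z)`. -/
noncomputable def condEntYZ (p : (∀ i, X i) × Z × Y → ℝ) : ℝ :=
  -∑ z, ∑ y, margZY p z y * logb 2 (margZY p z y / margZ p z)

/-- Specific information `I(Z : y)` of `Z` about the state `y`. -/
noncomputable def specInfoZ (p : (∀ i, X i) × Z × Y → ℝ) (y : Y) : ℝ :=
  ∑ z, (margZY p z y / margY p y) * logb 2 ((margZY p z y / margY p y) / margZ p z)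

/-- Specific information `I(X i : y)` of the predictor `X i` about the state `y`. -/
noncomputable def specInfoXi (p : (∀ i, X i) × Z × Y → ℝ) (i : ι) (y : Y) : ℝ :=
  ∑ u, (margXiY p i u y / margY p y) * logb 2 ((margXiY p i u y / margY p y) / margXi p i u)

end Defs

/-!
Rewriting `p(u|y) / p(u)` as `p(y|u) / p(y)` gives
`I(U : y) = -log p(y) + ∑ u, p(u|y) * log p(y|u)`, so every predictor satisfies
`I(U : y) ≤ -log p(y)`. If `H(Y|Z) = 0` then `p(y|z) = 1` whenever `p(z, y) > 0`, so `Z` attains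
this bound at every state `y` and never lowers the minimum over the other predictors.
-/

section SpecificInformation

variable {U Y : Type*} [Fintype U] [Fintype Y] {q : U → Y → ℝ} {y : Y}

/-- Specific information `I(U : y)` of a predictor `U` about the state `y`, as a function of the
joint pmf `q u y` of `(U, Y)`; the marginals are its row and column sums. -/
noncomputable def specInfo (q : U → Y → ℝ) (y : Y) : ℝ :=
  ∑ u, (q u y / ∑ u', q u' y) * logb 2 ((q u y / ∑ u', q u' y) / ∑ y', q u y')

/-- Conditional entropy `H(Y|U)` in bits, as a function of the joint pmf `q u y` of `(U, Y)`. -/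
noncomputable def condEntropy (q : U → Y → ℝ) : ℝ :=
  -∑ u, ∑ y, q u y * logb 2 (q u y / ∑ y', q u y')

lemma logb_div_sum_nonpos {b : ℝ} (hb : 1 < b) {f : Y → ℝ} (hf : ∀ y, 0 ≤ f y) (y : Y) :
    logb b (f y / ∑ y', f y') ≤ 0 :=
  have hsum : 0 ≤ ∑ y', f y' := sum_nonneg fun y' _ => hf y'
  logb_nonpos hb (div_nonneg (hf y) hsum)
    (div_le_one_of_le₀ (single_le_sum (fun y' _ => hf y') (mem_univ y)) hsum)

lemma eq_zero_or_eq_sum_of_condEntropy_eq_zero (hq : ∀ u y, 0 ≤ q u y)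
    (hent : condEntropy q = 0) (u : U) (y : Y) : q u y = 0 ∨ q u y = ∑ y', q u y' := by
  have hterm_nonpos (u y) : q u y * logb 2 (q u y / ∑ y', q u y') ≤ 0 :=
    mul_nonpos_of_nonneg_of_nonpos (hq u y) (logb_div_sum_nonpos one_lt_two (hq u) y)
  have hrow : ∑ y, q u y * logb 2 (q u y / ∑ y', q u y') = 0 :=
    (sum_eq_zero_iff_of_nonpos fun u _ => sum_nonpos fun y _ => hterm_nonpos u y).1
      (neg_eq_zero.1 hent) u (mem_univ u)
  have hterm : q u y * logb 2 (q u y / ∑ y', q u y') = 0 :=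
    (sum_eq_zero_iff_of_nonpos fun y _ => hterm_nonpos u y).1 hrow y (mem_univ y)
  refine or_iff_not_imp_left.2 fun hne => ?_
  have hpos : 0 < q u y := (hq u y).lt_of_ne' hne
  have hrow_pos : 0 < ∑ y', q u y' :=
    hpos.trans_le (single_le_sum (fun y' _ => hq u y') (mem_univ y))
  have hlog : logb 2 (q u y / ∑ y', q u y') = 0 := (mul_eq_zero.1 hterm).resolve_left hne
  exact (div_eq_one_iff_eq hrow_pos.ne').1
    (eq_one_of_pos_of_logb_eq_zero one_lt_two (div_pos hpos hrow_pos) hlog)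

lemma specInfo_eq_neg_logb_add_sum (hq : ∀ u y, 0 ≤ q u y) (hy : 0 < ∑ u, q u y) :
    specInfo q y = -logb 2 (∑ u, q u y) +
      ∑ u, (q u y / ∑ u', q u' y) * logb 2 (q u y / ∑ y', q u y') := by
  have hterm (u : U) :
      (q u y / ∑ u', q u' y) * logb 2 ((q u y / ∑ u', q u' y) / ∑ y', q u y') =
        (q u y / ∑ u', q u' y) * -logb 2 (∑ u', q u' y) +
          (q u y / ∑ u', q u' y) * logb 2 (q u y / ∑ y', q u y') := by
    rcases (hq u y).eq_or_lt with h0 | hpos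
    · simp [← h0]
    · have hrow : 0 < ∑ y', q u y' :=
        hpos.trans_le (single_le_sum (fun y' _ => hq u y') (mem_univ y))
      rw [div_right_comm, logb_div (div_pos hpos hrow).ne' hy.ne']
      ring
  rw [specInfo, sum_congr rfl fun u _ => hterm u, sum_add_distrib, ← sum_mul, ← sum_div,
    div_self hy.ne', one_mul]

lemma specInfo_le_neg_logb (hq : ∀ u y, 0 ≤ q u y) (hy : 0 < ∑ u, q u y) :
    specInfo q y ≤ -logb 2 (∑ u, q u y) := by
  rw [specInfo_eq_neg_logb_add_sum hq hy]
  exact add_le_of_nonpos_right <| sum_nonpos fun u _ =>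
    mul_nonpos_of_nonneg_of_nonpos (div_nonneg (hq u y) hy.le)
      (logb_div_sum_nonpos one_lt_two (hq u) y)

lemma specInfo_eq_neg_logb_of_condEntropy_eq_zero (hq : ∀ u y, 0 ≤ q u y)
    (hent : condEntropy q = 0) (hy : 0 < ∑ u, q u y) :
    specInfo q y = -logb 2 (∑ u, q u y) := by
  rw [specInfo_eq_neg_logb_add_sum hq hy, add_eq_left]
  refine sum_eq_zero fun u _ => ?_
  rcases eq_or_ne (q u y) 0 with h0 | hne
  · rw [h0, zero_div, zero_mul]
  · have hrow := (eq_zero_or_eq_sum_of_condEntropy_eq_zero hq hent u y).resolve_left hne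
    rw [← hrow, div_self hne, logb_one, mul_zero]

end SpecificInformation

section JointPmf

variable {ι : Type*} [Fintype ι] [DecidableEq ι] {X : ι → Type*} [∀ i, Fintype (X i)]
  {Z Y : Type*}

lemma margZY_nonneg {p : (∀ i, X i) × Z × Y → ℝ} (hnn : ∀ a, 0 ≤ p a) (z : Z) (y : Y) :
    0 ≤ margZY p z y :=
  sum_nonneg fun _ _ => hnn _

lemma sum_margZY_eq_margY [Fintype Z] (p : (∀ i, X i) × Z × Y → ℝ) (y : Y) :
    ∑ z, margZY p z y = margY p y :=
  sum_comm

lemma sum_margZY_eq_margZ [Fintype Y] (p : (∀ i, X i) × Z × Y → ℝ) (z : Z) :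
    ∑ y, margZY p z y = margZ p z :=
  sum_comm

lemma specInfoZ_eq_specInfo [Fintype Z] [Fintype Y] (p : (∀ i, X i) × Z × Y → ℝ) (y : Y) :
    specInfoZ p y = specInfo (margZY p) y := by
  simp only [specInfoZ, specInfo, sum_margZY_eq_margY, sum_margZY_eq_margZ]

lemma condEntYZ_eq_condEntropy [Fintype Z] [Fintype Y] (p : (∀ i, X i) × Z × Y → ℝ) :
    condEntYZ p = condEntropy (margZY p) := by
  simp only [condEntYZ, condEntropy, sum_margZY_eq_margZ]

variable [∀ i, DecidableEq (X i)] [Fintype Z]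

lemma margXiY_nonneg {p : (∀ i, X i) × Z × Y → ℝ} (hnn : ∀ a, 0 ≤ p a) (i : ι) (u : X i)
    (y : Y) : 0 ≤ margXiY p i u y :=
  sum_nonneg fun _ _ => sum_nonneg fun _ _ => ite_nonneg (hnn _) le_rfl

lemma sum_margXiY_eq_margY (p : (∀ i, X i) × Z × Y → ℝ) (i : ι) (y : Y) :
    ∑ u, margXiY p i u y = margY p y := by
  simp only [margXiY, margY]
  rw [sum_comm]
  refine sum_congr rfl fun x _ => ?_
  rw [sum_comm]
  simp only [sum_ite_eq, mem_univ, if_true]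

lemma sum_margXiY_eq_margXi [Fintype Y] (p : (∀ i, X i) × Z × Y → ℝ) (i : ι) (u : X i) :
    ∑ y, margXiY p i u y = margXi p i u := by
  simp only [margXiY, margXi]
  rw [sum_comm]
  exact sum_congr rfl fun x _ => sum_comm

lemma specInfoXi_eq_specInfo [Fintype Y] (p : (∀ i, X i) × Z × Y → ℝ) (i : ι) (y : Y) :
    specInfoXi p i y = specInfo (margXiY p i) y := by
  simp only [specInfoXi, specInfo, sum_margXiY_eq_margY, sum_margXiY_eq_margXi]

lemma specInfoXi_le_specInfoZ [Fintype Y] {p : (∀ i, X i) × Z × Y → ℝ} (hnn : ∀ a, 0 ≤ p a)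
    (hcondEnt : condEntYZ p = 0) (i : ι) {y : Y} (hy : 0 < margY p y) :
    specInfoXi p i y ≤ specInfoZ p y := by
  rw [specInfoXi_eq_specInfo, specInfoZ_eq_specInfo]
  rw [condEntYZ_eq_condEntropy] at hcondEnt
  calc specInfo (margXiY p i) y
      ≤ -logb 2 (∑ u, margXiY p i u y) :=
        specInfo_le_neg_logb (margXiY_nonneg hnn i) (by rwa [sum_margXiY_eq_margY])
    _ = -logb 2 (∑ z, margZY p z y) := by rw [sum_margXiY_eq_margY, sum_margZY_eq_margY]
    _ = specInfo (margZY p) y :=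
        (specInfo_eq_neg_logb_of_condEntropy_eq_zero (margZY_nonneg hnn) hcondEnt
          (by rwa [sum_margZY_eq_margY])).symm

end JointPmf

theorem stmt_2 {ι : Type*} [Fintype ι] [DecidableEq ι] [Nonempty ι] {X : ι → Type*} [∀ i, Fintype (X i)]
    [∀ i, DecidableEq (X i)] {Z Y : Type*} [Fintype Z] [Fintype Y]
    (p : (∀ i, X i) × Z × Y → ℝ)
    (hnn : ∀ a, 0 ≤ p a)
    (hsum : ∑ a, p a = 1)
    (hcondEnt : condEntYZ p = 0) :
    ∑ y ∈ univ.filter (fun y => 0 < margY p y),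
        margY p y * min (specInfoZ p y) (univ.inf' univ_nonempty fun i => specInfoXi p i y) =
      ∑ y ∈ univ.filter (fun y => 0 < margY p y),
        margY p y * univ.inf' univ_nonempty (fun i => specInfoXi p i y) := by
  refine sum_congr rfl fun y hy => ?_
  have hy_pos : 0 < margY p y := (mem_filter.1 hy).2
  obtain ⟨i⟩ := ‹Nonempty ι›
  have hinf_le : univ.inf' univ_nonempty (fun i => specInfoXi p i y) ≤ specInfoZ p y :=
    (inf'_le _ (mem_univ i)).trans (specInfoXi_le_specInfoZ hnn hcondEnt i hy_pos)
  rw [min_eq_right hinf_le]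
end
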